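/- arXiv:1011.4888 — 2 statements merged into one kernel-verified Lean document; each statement's English description precedes it below -/
import Mathlib

section
/- Let P be a set of n points in general position in the plane with exactly one point w interior to the convex hull of P. Let Q consist of the edges of the boundary of the convex hull of P together with two edges uw and vw (u, v hull vertices) chosen so that the angle ∠uwv is maximal. Then every plane spanning tree of the complete geometric graph on P contains at least two edges of Q. -/
open Set EuclideanGeometry

/-- A plane (non-self-intersecting) spanning tree of the complete geometric graph on a
finite point set `P`. -/
def IsPlaneSpanningTree {P : Finset (EuclideanSpace ℝ (Fin 2))}
    (T : SimpleGraph ↥P) : Prop :=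
  T.IsTree ∧ ∀ a b x y : ↥P, T.Adj a b → T.Adj x y →
    a ≠ x → a ≠ y → b ≠ x → b ≠ y →
    openSegment ℝ (a : EuclideanSpace ℝ (Fin 2)) (b : EuclideanSpace ℝ (Fin 2)) ∩
      openSegment ℝ (x : EuclideanSpace ℝ (Fin 2)) (y : EuclideanSpace ℝ (Fin 2)) = ∅

/-- `ab` is an edge of the boundary of the convex hull of `P`. -/
def IsHullEdge (P : Finset (EuclideanSpace ℝ (Fin 2)))
    (a b : EuclideanSpace ℝ (Fin 2)) : Prop :=
  a ∈ P ∧ b ∈ P ∧ a ≠ b ∧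
    ∃ f : EuclideanSpace ℝ (Fin 2) →ₗ[ℝ] ℝ, f a = f b ∧
      ∀ p ∈ P, p ≠ a → p ≠ b → f p < f a

/-- An edge of the complete geometric graph belongs to the set `Q` consisting of the hull
boundary edges together with the two edges `uw` and `vw`. -/
def InQ (P : Finset (EuclideanSpace ℝ (Fin 2)))
    (u v w a b : EuclideanSpace ℝ (Fin 2)) : Prop :=
  IsHullEdge P a b ∨ s(a, b) = s(u, w) ∨ s(a, b) = s(v, w)

/-!
Call a segment between two points other than `w` a chord, and the set of points that it separates
from `w` its cap. All points but `w` being in convex position, a segment joining the two sides of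
a chord crosses it. So an edge of the tree that starts in the cap of a chord `ab` of the tree ends
in the closed cap, and is a chord with a smaller cap; by induction the closed cap of `ab` contains
an edge of the tree on the boundary of the hull.

Without chords the tree is a star centred at `w` and contains `uw` and `vw`. Otherwise let `ab` be a
chord of the tree whose cap is maximal. If some chord of the tree has an endpoint strictly on the
side of `w` of the line `ab`, then its closed cap shares at most one point with that of `ab`, and
the two closed caps provide two hull edges. If not, the points strictly on that side are adjacent at
most to `w`, and `w` itself is adjacent to `a` or `b`. When neither `u` nor `v` is adjacent to `w`,
both lie in the closed cap of `ab`, that is, in the angle `∠ a w b`; this angle is at most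
`∠ u w v`, which forces `{u, v} = {a, b}`: a contradiction.
-/

local notation "ℝ²" => EuclideanSpace ℝ (Fin 2)

section Segment

variable {𝕜 V : Type*} [Field 𝕜] [LinearOrder 𝕜] [IsStrictOrderedRing 𝕜] [AddCommGroup V]
  [Module 𝕜 V] {g : V →ᵃ[𝕜] 𝕜} {x y z : V}

lemma exists_mem_openSegment_eq_zero (hx : g x < 0) (hy : 0 < g y) :
    ∃ z ∈ openSegment 𝕜 x y, g z = 0 := by
  have h0 : (0 : 𝕜) ∈ g '' openSegment 𝕜 x y := by
    rw [image_openSegment, openSegment_eq_Ioo (hx.trans hy)]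
    exact ⟨hx, hy⟩
  exact h0

lemma nonneg_of_mem_segment (hx : 0 ≤ g x) (hy : 0 ≤ g y) (hz : z ∈ segment 𝕜 x y) : 0 ≤ g z :=
  ((convex_Ici (0 : 𝕜)).affine_preimage g).segment_subset hx hy hz

lemma pos_of_mem_openSegment (hx : 0 ≤ g x) (hy : 0 < g y) (hz : z ∈ openSegment 𝕜 x y) :
    0 < g z := by
  obtain ⟨s, t, hs, ht, hst, rfl⟩ := hz
  rw [Convex.combo_affine_apply hst, smul_eq_mul, smul_eq_mul]
  exact add_pos_of_nonneg_of_pos (mul_nonneg hs.le hx) (mul_pos ht hy)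

lemma nonpos_of_mem_segment (hx : g x ≤ 0) (hy : g y ≤ 0) (hz : z ∈ segment 𝕜 x y) : g z ≤ 0 :=
  ((convex_Iic (0 : 𝕜)).affine_preimage g).segment_subset hx hy hz

end Segment

lemma wbtw_or_wbtw_of_wbtw {𝕜 V X : Type*} [Field 𝕜] [LinearOrder 𝕜] [IsStrictOrderedRing 𝕜]
    [AddCommGroup V] [Module 𝕜 V] [AddTorsor V X] {x y z z' : X} (hxy : x ≠ y)
    (hz : Wbtw 𝕜 x z y) (hz' : Wbtw 𝕜 x z' y) : Wbtw 𝕜 x z z' ∨ Wbtw 𝕜 x z' z :=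
  wbtw_total_of_sameRay_vsub_left <| hz.sameRay_vsub_left.trans hz'.sameRay_vsub_left.symm
    fun h => absurd (vsub_eq_zero_iff_eq.1 h).symm hxy

lemma mem_interior_convexHull_of_mem_openSegment {V : Type*} [NormedAddCommGroup V]
    [NormedSpace ℝ V] (hV : Module.finrank ℝ V = 2) {a b c d z : V}
    (h : ¬ Collinear ℝ ({b, c, d} : Set V)) (hz : z ∈ openSegment ℝ c d)
    (ha : a ∈ openSegment ℝ b z) : a ∈ interior (convexHull ℝ ({b, c, d} : Set V)) := by
  have hV' : FiniteDimensional ℝ V := Module.finite_of_finrank_eq_succ hV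
  have hind := affineIndependent_iff_not_collinear_set.2 h
  let B : AffineBasis (Fin 3) ℝ V :=
    ⟨![b, c, d], hind, hind.affineSpan_eq_top_iff_card_eq_finrank_add_one.2 (by simp [hV])⟩
  have hB : range B = {b, c, d} := by
    change range ![b, c, d] = _
    simp only [Matrix.range_cons, Matrix.range_empty, union_empty, singleton_union]
  rw [← hB, AffineBasis.interior_convexHull]
  obtain ⟨s, t, hs, ht, hst, rfl⟩ := hz
  obtain ⟨s', t', hs', ht', hst', rfl⟩ := ha
  intro i
  have hb : B.coord i b = if i = 0 then 1 else 0 := B.coord_apply i 0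
  have hc : B.coord i c = if i = 1 then 1 else 0 := B.coord_apply i 1
  have hd : B.coord i d = if i = 2 then 1 else 0 := B.coord_apply i 2
  rw [Convex.combo_affine_apply hst', Convex.combo_affine_apply hst, hb, hc, hd]
  fin_cases i <;>
    simp only [Fin.zero_eta, Fin.mk_one, Fin.reduceFinMk, Fin.isValue, Fin.reduceEq, zero_ne_one,
      one_ne_zero, ↓reduceIte, smul_eq_mul, mul_one, mul_zero, add_zero, zero_add] <;>
    positivity

lemma angle_lt_angle_of_wbtw {V X : Type*} [NormedAddCommGroup V] [InnerProductSpace ℝ V]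
    [MetricSpace X] [NormedAddTorsor V X] {a b o y z : X} (h : ¬ Collinear ℝ {a, b, o})
    (hy : Wbtw ℝ a y b) (hz : Wbtw ℝ a z b) (hya : y ≠ a) (hza : z ≠ a) :
    ∠ y o z < ∠ a o b := by
  have hab : a ≠ b := ne₁₂_of_not_collinear h
  wlog hyz : Wbtw ℝ a y z generalizing y z
  · rw [angle_comm]
    exact this hz hy hza hya ((wbtw_or_wbtw_of_wbtw hab hy hz).resolve_left hyz)
  have hline {t : X} (ht : Wbtw ℝ a t b) (hta : t ≠ a) : ¬ Collinear ℝ {a, t, o} := fun hc =>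
    have hb : b ∈ affineSpan ℝ {a, t, o} :=
      affineSpan_mono ℝ (insert_subset_insert (by simp))
        (ht.right_mem_affineSpan_of_left_ne hta.symm)
    h <| ((collinear_insert_iff_of_mem_affineSpan hb).2 hc).subset <| by
      simp [insert_subset_iff]
  have hao : o ≠ a := (ne₁₃_of_not_collinear h).symm
  have hzo : o ≠ z := (ne₂₃_of_not_collinear (hline hz hza)).symm
  have hbo : o ≠ b := (ne₂₃_of_not_collinear h).symm
  have hyz_lt : ∠ y o z < ∠ a o z := by
    have hpos : 0 < ∠ a o y := angle_pos_of_not_collinear fun hc => hline hy hya <| by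
      rwa [pair_comm] at hc
    linarith [angle_add_of_ne_of_ne hao hzo hyz]
  calc ∠ y o z < ∠ a o z := hyz_lt
    _ ≤ ∠ a o b := by
      linarith [angle_add_of_ne_of_ne hao hbo hz, angle_nonneg z o b]

section Side

/-- Twice the signed area of the triangle `a b p`, as an affine function of `p`: it vanishes on the
line `ab` and its sign tells on which side of that line `p` lies. -/
noncomputable def signedArea (a b : ℝ²) : ℝ² →ᵃ[ℝ] ℝ :=
  (b 0 - a 0) • ((EuclideanSpace.projₗ 1).toAffineMap - AffineMap.const ℝ ℝ² (a 1)) -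
    (b 1 - a 1) • ((EuclideanSpace.projₗ 0).toAffineMap - AffineMap.const ℝ ℝ² (a 0))

/-- The side of the line `ab` on which `p` lies, as an affine function of `p` normalised to be
positive on the side of `w`. -/
noncomputable def side (w a b : ℝ²) : ℝ² →ᵃ[ℝ] ℝ :=
  signedArea a b w • signedArea a b

variable {w a b p : ℝ²}

lemma signedArea_apply (a b p : ℝ²) :
    signedArea a b p = (b 0 - a 0) * (p 1 - a 1) - (b 1 - a 1) * (p 0 - a 0) := rfl

lemma collinear_of_signedArea_eq_zero (hab : a ≠ b) (h : signedArea a b p = 0) :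
    Collinear ℝ {a, b, p} := by
  rw [signedArea_apply] at h
  have hpos : 0 < (b 0 - a 0) ^ 2 + (b 1 - a 1) ^ 2 := by
    by_contra! hle
    exact hab (PiLp.ext (Fin.forall_fin_two.2 ⟨by nlinarith, by nlinarith⟩))
  -- `r` is the coefficient of the orthogonal projection of `p` to the line `ab`.
  obtain ⟨r, hr⟩ : ∃ r : ℝ, AffineMap.lineMap a b r = p := by
    refine ⟨((b 0 - a 0) * (p 0 - a 0) + (b 1 - a 1) * (p 1 - a 1)) /
      ((b 0 - a 0) ^ 2 + (b 1 - a 1) ^ 2), ?_⟩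
    refine PiLp.ext (Fin.forall_fin_two.2 ⟨?_, ?_⟩) <;>
      simp only [AffineMap.lineMap_apply, vsub_eq_sub, vadd_eq_add, PiLp.add_apply, PiLp.smul_apply,
        PiLp.sub_apply, smul_eq_mul] <;>
      field_simp
    · linear_combination (b 1 - a 1) * h
    · linear_combination -(b 0 - a 0) * h
  have := collinear_insert_of_mem_affineSpan_pair (hr ▸ AffineMap.lineMap_mem_affineSpan_pair r a b)
  rwa [Set.insert_comm, Set.pair_comm] at this

lemma side_apply (w a b p : ℝ²) : side w a b p = signedArea a b w * signedArea a b p := rfl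

@[simp]
lemma side_left (w a b : ℝ²) : side w a b a = 0 := by
  rw [side_apply, signedArea_apply a b a]; ring

@[simp]
lemma side_right (w a b : ℝ²) : side w a b b = 0 := by
  rw [side_apply, signedArea_apply a b b]; ring

lemma side_comm (w a b : ℝ²) : side w a b = side w b a := by
  ext p
  simp only [side_apply, signedArea_apply]
  ring

lemma side_self_pos (hab : a ≠ b) (hw : ¬ Collinear ℝ {a, b, w}) : 0 < side w a b w :=
  mul_self_pos.2 fun h => hw (collinear_of_signedArea_eq_zero hab h)

lemma collinear_of_side_eq_zero (hab : a ≠ b) (hw : ¬ Collinear ℝ {a, b, w})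
    (h : side w a b p = 0) : Collinear ℝ {a, b, p} :=
  collinear_of_signedArea_eq_zero hab <| (mul_eq_zero.1 h).resolve_left
    fun h' => hw (collinear_of_signedArea_eq_zero hab h')

end Side

section Caps

/-- `P` is in general position and, with the possible exception of `w`, in convex position. -/
structure InConvexPositionExcept (P : Finset ℝ²) (w : P) : Prop where
  not_collinear (p q r : P) :
    p ≠ q → q ≠ r → p ≠ r → ¬ Collinear ℝ ({(p : ℝ²), (q : ℝ²), (r : ℝ²)} : Set ℝ²)
  notMem_interior (p : P) : p ≠ w → (p : ℝ²) ∉ interior (convexHull ℝ (P : Set ℝ²))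

/-- A chord is a segment `ab` between two distinct points of `P`, both different from the centre
`w`; sides of the hull count as chords. -/
structure IsChord {P : Finset ℝ²} (w a b : P) : Prop where
  left_ne : a ≠ w
  right_ne : b ≠ w
  ne : a ≠ b

/-- The (open) cap of the chord `ab`: the points of `P` that the line `ab` separates from `w`. -/
def cap {P : Finset ℝ²} (w a b : P) : Set P :=
  {p | side w a b p < 0}

variable {P : Finset ℝ²} {w a b c d p u v x y : P}

lemma IsChord.symm (h : IsChord w a b) : IsChord w b a :=
  ⟨h.right_ne, h.left_ne, h.ne.symm⟩

lemma IsChord.mk_ne_mk_center (h : IsChord w a b) : s(a, b) ≠ s(x, w) := fun heq =>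
  (Sym2.eq_iff.1 heq).elim (fun hb => h.right_ne hb.2) fun ha => h.left_ne ha.1

namespace InConvexPositionExcept

variable (hP : InConvexPositionExcept P w)
include hP

lemma notMem_openSegment {z : ℝ²} (ha : a ≠ w) (hbc : b ≠ c) (hcd : c ≠ d) (hbd : b ≠ d)
    (hz : z ∈ openSegment ℝ (c : ℝ²) d) : (a : ℝ²) ∉ openSegment ℝ (b : ℝ²) z := fun h =>
  hP.notMem_interior a ha <| interior_mono (convexHull_mono (by simp [insert_subset_iff])) <|
    mem_interior_convexHull_of_mem_openSegment finrank_euclideanSpace_fin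
      (hP.not_collinear b c d hbc hcd hbd) hz h

lemma ne_of_mem_openSegment {z : ℝ²} (hac : a ≠ c) (hcd : c ≠ d) (had : a ≠ d)
    (hz : z ∈ openSegment ℝ (c : ℝ²) d) : z ≠ a := by
  rintro rfl
  exact hP.not_collinear c a d hac.symm had hcd
    (mem_segment_iff_wbtw.1 (openSegment_subset_segment _ _ _ hz)).collinear

lemma side_center_pos (hab : IsChord w a b) : 0 < side w a b w :=
  side_self_pos (Subtype.coe_ne_coe.2 hab.ne)
    (hP.not_collinear a b w hab.ne hab.right_ne hab.left_ne)

lemma eq_or_eq_of_side_eq_zero (hab : IsChord w a b) (h : side w a b p = 0) : p = a ∨ p = b := by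
  by_contra! hne
  exact hP.not_collinear a b p hab.ne hne.2.symm hne.1.symm <|
    collinear_of_side_eq_zero (Subtype.coe_ne_coe.2 hab.ne)
      (hP.not_collinear a b w hab.ne hab.right_ne hab.left_ne) h

lemma nonempty_openSegment_inter_openSegment (hab : IsChord w a b) (hc : side w a b c < 0)
    (hd : 0 < side w a b d) :
    (openSegment ℝ (a : ℝ²) b ∩ openSegment ℝ (c : ℝ²) d).Nonempty := by
  have hac : a ≠ c := by rintro rfl; simp at hc
  have hbc : b ≠ c := by rintro rfl; simp at hc
  have had : a ≠ d := by rintro rfl; simp at hd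
  have hbd : b ≠ d := by rintro rfl; simp at hd
  have hcd : c ≠ d := by rintro rfl; exact hc.not_gt hd
  obtain ⟨z, hz, hz0⟩ := exists_mem_openSegment_eq_zero hc hd
  have hza : z ≠ a := hP.ne_of_mem_openSegment hac hcd had hz
  have hzb : z ≠ b := hP.ne_of_mem_openSegment hbc hcd hbd hz
  have hab' : (a : ℝ²) ≠ b := Subtype.coe_ne_coe.2 hab.ne
  have hcol : Collinear ℝ {(a : ℝ²), (b : ℝ²), z} := collinear_of_side_eq_zero hab'
    (hP.not_collinear a b w hab.ne hab.right_ne hab.left_ne) hz0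
  rcases hcol.wbtw_or_wbtw_or_wbtw with h | h | h
  · exact absurd (mem_openSegment_of_ne_left_right hab' hzb (mem_segment_iff_wbtw.2 h))
      (hP.notMem_openSegment hab.right_ne hac hcd had hz)
  · refine ⟨z, mem_openSegment_of_ne_left_right hza.symm hzb.symm ?_, hz⟩
    exact mem_segment_iff_wbtw.2 h.symm
  · exact absurd (mem_openSegment_of_ne_left_right hab'.symm hza (mem_segment_iff_wbtw.2 h.symm))
      (hP.notMem_openSegment hab.left_ne hbc hcd hbd hz)

lemma side_neg_of_side_neg (hab : IsChord w a b) (hcd : IsChord w c d) (hc : side w a b c ≤ 0)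
    (hd : side w a b d ≤ 0) (hp : side w c d p < 0) : side w a b p < 0 := by
  obtain ⟨z, hzcd, hzpw⟩ :=
    hP.nonempty_openSegment_inter_openSegment hcd hp (hP.side_center_pos hcd)
  by_contra! h
  exact (pos_of_mem_openSegment h (hP.side_center_pos hab) hzpw).not_ge
    (nonpos_of_mem_segment hc hd (openSegment_subset_segment _ _ _ hzcd))

lemma side_nonpos_of_side_nonpos (hab : IsChord w a b) (hcd : IsChord w c d)
    (hc : side w a b c ≤ 0) (hd : side w a b d ≤ 0) (hp : side w c d p ≤ 0) :
    side w a b p ≤ 0 := by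
  rcases hp.lt_or_eq with hp | hp
  · exact (hP.side_neg_of_side_neg hab hcd hc hd hp).le
  · rcases hP.eq_or_eq_of_side_eq_zero hcd hp with rfl | rfl <;> assumption

lemma cap_ssubset_cap (hab : IsChord w a b) (hcd : IsChord w c d) (hc : side w a b c < 0)
    (hd : side w a b d ≤ 0) : cap w c d ⊂ cap w a b :=
  ssubset_iff_exists.2 ⟨fun _ hp => hP.side_neg_of_side_neg hab hcd hc.le hd hp, c, hc,
    by simp [cap]⟩

lemma eq_right_of_side_nonpos (hab : IsChord w a b) (hxy : IsChord w x y) (hx : 0 < side w a b x)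
    (hy : 0 ≤ side w a b y) (ha : 0 ≤ side w x y a) (hb : 0 ≤ side w x y b)
    (hcab : side w a b c ≤ 0) (hcxy : side w x y c ≤ 0) : c = y := by
  rcases hcxy.eq_or_lt with hcxy | hcxy
  · exact (hP.eq_or_eq_of_side_eq_zero hxy hcxy).resolve_left fun h => (h ▸ hcab).not_gt hx
  rcases hcab.eq_or_lt with hcab | hcab
  · rcases hP.eq_or_eq_of_side_eq_zero hab hcab with rfl | rfl <;> linarith
  -- The segment `wc` meets `ab` in `z` and `xy` in `z'`; each of the two would come first.
  exfalso
  have hw_ab := hP.side_center_pos hab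
  have hw_xy := hP.side_center_pos hxy
  obtain ⟨z, hzab, hz⟩ := hP.nonempty_openSegment_inter_openSegment hab hcab hw_ab
  obtain ⟨z', hzxy, hz'⟩ := hP.nonempty_openSegment_inter_openSegment hxy hcxy hw_xy
  have hab_z : side w a b z ≤ 0 := nonpos_of_mem_segment (side_left _ _ _).le (side_right _ _ _).le
    (openSegment_subset_segment _ _ _ hzab)
  have hxy_z' : side w x y z' ≤ 0 := nonpos_of_mem_segment (side_left _ _ _).le
    (side_right _ _ _).le (openSegment_subset_segment _ _ _ hzxy)
  have hab_z' : 0 < side w a b z' :=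
    pos_of_mem_openSegment hy hx (openSegment_symm ℝ (x : ℝ²) y ▸ hzxy)
  have hxy_z : 0 ≤ side w x y z :=
    nonneg_of_mem_segment ha hb (openSegment_subset_segment _ _ _ hzab)
  have hzz' : z ≠ z' := by rintro rfl; exact hab_z.not_gt hab_z'
  have hwz : (w : ℝ²) ≠ z := by rintro rfl; exact hab_z.not_gt hw_ab
  have hwz' : (w : ℝ²) ≠ z' := by rintro rfl; exact hxy_z'.not_gt hw_xy
  have hcw : (w : ℝ²) ≠ c := by intro h; exact hcab.not_gt (h ▸ hw_ab)
  rcases wbtw_or_wbtw_of_wbtw hcw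
    (mem_segment_iff_wbtw.1 (openSegment_subset_segment _ _ _ hz)).symm
    (mem_segment_iff_wbtw.1 (openSegment_subset_segment _ _ _ hz')).symm with h | h
  · exact hab_z.not_gt <| pos_of_mem_openSegment hab_z'.le hw_ab <|
      mem_openSegment_of_ne_left_right hzz'.symm hwz (mem_segment_iff_wbtw.2 h.symm)
  · exact hxy_z'.not_gt <| pos_of_mem_openSegment hxy_z hw_xy <|
      mem_openSegment_of_ne_left_right hzz' hwz' (mem_segment_iff_wbtw.2 h.symm)

lemma isHullEdge_of_side_nonneg (hab : IsChord w a b) (h : ∀ p : P, 0 ≤ side w a b p) :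
    IsHullEdge P a b := by
  have hside (p : ℝ²) : -(side w a b).linear p = -(side w a b).linear a - side w a b p := by
    have := (side w a b).linearMap_vsub p a
    rw [vsub_eq_sub, map_sub, side_left, vsub_eq_sub, sub_zero] at this
    linarith
  refine ⟨a.2, b.2, Subtype.coe_ne_coe.2 hab.ne, -(side w a b).linear, ?_, fun p hp hpa hpb => ?_⟩
  · simpa using (hside b).symm
  · have hne : side w a b p ≠ 0 := fun h0 =>
      (hP.eq_or_eq_of_side_eq_zero (p := ⟨p, hp⟩) hab h0).elim (fun h => hpa (Subtype.ext_iff.1 h))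
        fun h => hpb (Subtype.ext_iff.1 h)
    have hpos := (h ⟨p, hp⟩).lt_of_ne' hne
    simpa using (hside p).trans_lt (sub_lt_self _ hpos)

lemma exists_wbtw_wbtw (hab : IsChord w a b) (hp : side w a b p ≤ 0) (hpa : p ≠ a) :
    ∃ z : ℝ², Wbtw ℝ (a : ℝ²) z b ∧ Wbtw ℝ (w : ℝ²) z p ∧ z ≠ a ∧ z ≠ w := by
  rcases hp.eq_or_lt with hp | hp
  · obtain rfl := (hP.eq_or_eq_of_side_eq_zero hab hp).resolve_left hpa
    exact ⟨p, wbtw_self_right _ _ _, wbtw_self_right _ _ _, Subtype.coe_ne_coe.2 hpa,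
      Subtype.coe_ne_coe.2 hab.right_ne⟩
  · obtain ⟨z, hzab, hzpw⟩ :=
      hP.nonempty_openSegment_inter_openSegment hab hp (hP.side_center_pos hab)
    have hpw : p ≠ w := by rintro rfl; exact hp.not_gt (hP.side_center_pos hab)
    refine ⟨z, mem_segment_iff_wbtw.1 (openSegment_subset_segment _ _ _ hzab),
      (mem_segment_iff_wbtw.1 (openSegment_subset_segment _ _ _ hzpw)).symm, ?_, ?_⟩
    · rintro rfl
      exact hab.ne (Subtype.ext (left_mem_openSegment_iff.1 hzab))
    · rintro rfl
      exact hpw (Subtype.ext (right_mem_openSegment_iff.1 hzpw))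

lemma angle_lt_angle (hab : IsChord w a b) (hu : side w a b u ≤ 0) (hv : side w a b v ≤ 0)
    (hua : u ≠ a) (hva : v ≠ a) : ∠ (u : ℝ²) w v < ∠ (a : ℝ²) w b := by
  obtain ⟨y, hy, hwy, hya, hyw⟩ := hP.exists_wbtw_wbtw hab hu hua
  obtain ⟨z, hz, hwz, hza, hzw⟩ := hP.exists_wbtw_wbtw hab hv hva
  rw [← hwy.angle_eq_left _ hyw, ← hwz.angle_eq_right _ hzw]
  exact angle_lt_angle_of_wbtw (hP.not_collinear a b w hab.ne hab.right_ne hab.left_ne)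
    hy hz hya hza

lemma left_eq_or_eq_of_angle_le (hab : IsChord w a b) (hu : side w a b u ≤ 0)
    (hv : side w a b v ≤ 0) (h : ∠ (a : ℝ²) w b ≤ ∠ (u : ℝ²) w v) : u = a ∨ v = a := by
  by_contra! hne
  exact h.not_gt (hP.angle_lt_angle hab hu hv hne.1 hne.2)

end InConvexPositionExcept

end Caps

lemma exists_adj_of_mem_of_notMem {α : Type*} {G : SimpleGraph α} {s : Set α} {x y : α}
    (hG : G.Preconnected) (hx : x ∈ s) (hy : y ∉ s) :
    ∃ p q, G.Adj p q ∧ p ∈ s ∧ q ∉ s := by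
  obtain ⟨W⟩ := hG x y
  obtain ⟨e, -, he⟩ := W.exists_boundary_dart s hx hy
  exact ⟨e.fst, e.snd, e.adj, he⟩

section PlaneGraph

/-- A geometric graph on `P` is plane if no two of its edges without common endpoint cross. -/
def IsPlane {P : Finset ℝ²} (T : SimpleGraph P) : Prop :=
  ∀ a b x y : P, T.Adj a b → T.Adj x y → a ≠ x → a ≠ y → b ≠ x → b ≠ y →
    openSegment ℝ (a : ℝ²) b ∩ openSegment ℝ (x : ℝ²) y = ∅

variable {P : Finset ℝ²} {w a b c d u v x y : P} {T : SimpleGraph P}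

lemma adj_center_of_forall_not_isChord (hconn : T.Preconnected) (hx : x ≠ w)
    (h : ∀ y, T.Adj x y → ¬ IsChord w x y) : T.Adj x w := by
  have : Nontrivial P := ⟨x, w, hx⟩
  obtain ⟨y, hy⟩ := hconn.exists_adj_of_nontrivial x
  obtain rfl : y = w := by
    by_contra hyw
    exact h y hy ⟨hx, hyw, hy.ne⟩
  exact hy

namespace IsPlane

variable (hT : IsPlane T) (hP : InConvexPositionExcept P w)
include hT hP

lemma side_nonpos (hab : T.Adj a b) (hchord : IsChord w a b) (hcd : T.Adj c d)
    (hc : side w a b c < 0) : side w a b d ≤ 0 := by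
  by_contra! hd
  refine (hP.nonempty_openSegment_inter_openSegment hchord hc hd).ne_empty
    (hT a b c d hab hcd ?_ ?_ ?_ ?_) <;> rintro rfl <;> simp at hc hd

lemma exists_isHullEdge (hconn : T.Preconnected) (hab : T.Adj a b) (hchord : IsChord w a b) :
    ∃ c d : P, T.Adj c d ∧ IsChord w c d ∧ IsHullEdge P c d ∧
      side w a b c ≤ 0 ∧ side w a b d ≤ 0 := by
  induction hs : cap w a b using WellFoundedLT.induction generalizing a b with
  | ind s ih =>
  by_cases hcap : ∀ p : P, 0 ≤ side w a b p
  · exact ⟨a, b, hab, hchord, hP.isHullEdge_of_side_nonneg hchord hcap, by simp⟩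
  push Not at hcap
  obtain ⟨c, hc⟩ := hcap
  have : Nontrivial P := ⟨a, b, hchord.ne⟩
  obtain ⟨d, hcd⟩ := hconn.exists_adj_of_nontrivial c
  have hd : side w a b d ≤ 0 := hT.side_nonpos hP hab hchord hcd hc
  have hw := hP.side_center_pos hchord
  have hchord' : IsChord w c d :=
    ⟨by rintro rfl; exact hc.not_gt hw, by rintro rfl; exact hd.not_gt hw, hcd.ne⟩
  obtain ⟨e, f, hef, hefchord, hhull, he, hf⟩ :=
    ih _ (hs ▸ hP.cap_ssubset_cap hchord hchord' hc hd) hcd hchord' rfl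
  exact ⟨e, f, hef, hefchord, hhull,
    hP.side_nonpos_of_side_nonpos hchord hchord' hc.le hd he,
    hP.side_nonpos_of_side_nonpos hchord hchord' hc.le hd hf⟩

lemma side_nonneg_of_not_cap_ssubset (hab : T.Adj a b) (hchord : IsChord w a b) (hxy : T.Adj x y)
    (hxychord : IsChord w x y) (h : ¬ cap w a b ⊂ cap w x y) : 0 ≤ side w x y a := by
  by_contra! ha
  exact h <| hP.cap_ssubset_cap hxychord hchord ha (hT.side_nonpos hP hxy hxychord hab ha)

lemma exists_two_isHullEdge (hconn : T.Preconnected) (hab : T.Adj a b) (hchord : IsChord w a b)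
    (hxy : T.Adj x y) (hxychord : IsChord w x y) (hmax : ¬ cap w a b ⊂ cap w x y)
    (hx : 0 < side w a b x) :
    ∃ c d e f : P, T.Adj c d ∧ T.Adj e f ∧ s(c, d) ≠ s(e, f) ∧
      IsHullEdge P c d ∧ IsHullEdge P e f := by
  obtain ⟨c, d, hcd, hcdchord, hhull, hc, hd⟩ := hT.exists_isHullEdge hP hconn hab hchord
  obtain ⟨e, f, hef, hefchord, hhull', he, hf⟩ := hT.exists_isHullEdge hP hconn hxy hxychord
  have hy : 0 ≤ side w a b y := by
    by_contra! hy
    exact (hT.side_nonpos hP hab hchord hxy.symm hy).not_gt hx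
  have ha : 0 ≤ side w x y a := hT.side_nonneg_of_not_cap_ssubset hP hab hchord hxy hxychord hmax
  have hb : 0 ≤ side w x y b := by
    refine hT.side_nonneg_of_not_cap_ssubset hP hab.symm hchord.symm hxy hxychord ?_
    simpa only [cap, side_comm (w : ℝ²) b a] using hmax
  have hunique {p : P} (hp : side w a b p ≤ 0) (hp' : side w x y p ≤ 0) : p = y :=
    hP.eq_right_of_side_nonpos hchord hxychord hx hy ha hb hp hp'
  refine ⟨c, d, e, f, hcd, hef, fun heq => hcdchord.ne ?_, hhull, hhull'⟩
  rcases Sym2.eq_iff.1 heq with ⟨rfl, rfl⟩ | ⟨rfl, rfl⟩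
  · exact (hunique hc he).trans (hunique hd hf).symm
  · exact (hunique hc hf).trans (hunique hd he).symm

lemma adj_center_left_or_right (hconn : T.Preconnected) (hab : T.Adj a b) (hchord : IsChord w a b)
    (h : ∀ x y, T.Adj x y → IsChord w x y → side w a b x ≤ 0) : T.Adj a w ∨ T.Adj b w := by
  have hw := hP.side_center_pos hchord
  obtain ⟨p, q, hpq, hp, hq⟩ := exists_adj_of_mem_of_notMem hconn
    (s := {p : P | 0 < side w a b p}) hw (y := a) (by simp)
  rw [mem_ofPred_eq, not_lt] at hq
  have hqw : q ≠ w := by rintro rfl; exact hq.not_gt hw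
  obtain rfl : p = w := by
    by_contra hpw
    exact (h p q hpq ⟨hpw, hqw, hpq.ne⟩).not_gt hp
  have hq0 : side p a b q = 0 := hq.antisymm <| by
    by_contra! hq
    exact (hT.side_nonpos hP hab hchord hpq.symm hq).not_gt hp
  rcases hP.eq_or_eq_of_side_eq_zero hchord hq0 with rfl | rfl
  · exact .inl hpq.symm
  · exact .inr hpq.symm

lemma adj_center_of_angle_le (hconn : T.Preconnected) (hab : T.Adj a b) (hchord : IsChord w a b)
    (h : ∀ x y, T.Adj x y → IsChord w x y → side w a b x ≤ 0) (huw : u ≠ w) (hvw : v ≠ w)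
    (hangle : ∠ (a : ℝ²) w b ≤ ∠ (u : ℝ²) w v) : T.Adj u w ∨ T.Adj v w := by
  have hside {x : P} (hx : x ≠ w) (hxw : ¬ T.Adj x w) : side w a b x ≤ 0 := by
    by_contra! hpos
    exact hxw <| adj_center_of_forall_not_isChord hconn hx fun y hxy hchord' =>
      (h x y hxy hchord').not_gt hpos
  by_contra! hadj
  have hu := hside huw hadj.1
  have hv := hside hvw hadj.2
  rcases hT.adj_center_left_or_right hP hconn hab hchord h with ha | hb
  · rcases hP.left_eq_or_eq_of_angle_le hchord hu hv hangle with rfl | rfl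
    exacts [hadj.1 ha, hadj.2 ha]
  · rw [side_comm] at hu hv
    rw [angle_comm] at hangle
    rcases hP.left_eq_or_eq_of_angle_le hchord.symm hu hv hangle with rfl | rfl
    exacts [hadj.1 hb, hadj.2 hb]

end IsPlane

lemma exists_adj_isChord_cap_maximal (h : ∃ a b, T.Adj a b ∧ IsChord w a b) :
    ∃ a b, T.Adj a b ∧ IsChord w a b ∧
      ∀ x y, T.Adj x y → IsChord w x y → ¬ cap w a b ⊂ cap w x y := by
  obtain ⟨⟨a, b⟩, ⟨hab, hchord⟩, hmax⟩ := (toFinite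
    {e : P × P | T.Adj e.1 e.2 ∧ IsChord w e.1 e.2}).exists_maximalFor (fun e => cap w e.1 e.2) _
    (by simpa [Set.Nonempty] using h)
  exact ⟨a, b, hab, hchord, fun x y hxy hxychord hlt =>
    hlt.not_subset (hmax (j := (x, y)) ⟨hxy, hxychord⟩ hlt.subset)⟩

end PlaneGraph

theorem plane_tree_two_edges_in_Q_general (P : Finset ℝ²)
    (hgen : ∀ p ∈ P, ∀ q ∈ P, ∀ r ∈ P, p ≠ q → q ≠ r → p ≠ r →
      ¬ Collinear ℝ ({p, q, r} : Set ℝ²))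
    (w : ℝ²) (hwP : w ∈ P)
    (hwUnique : ∀ p ∈ P, p ≠ w → p ∉ interior (convexHull ℝ (P : Set ℝ²)))
    (u v : ℝ²) (huP : u ∈ P) (hvP : v ∈ P) (huw : u ≠ w) (hvw : v ≠ w) (huv : u ≠ v)
    (hmax : ∀ u' ∈ P, ∀ v' ∈ P, u' ≠ w → v' ≠ w → ∠ u' w v' ≤ ∠ u w v)
    (T : SimpleGraph P) (hconn : T.Connected) (hT : IsPlane T) :
    ∃ a b x y : P, T.Adj a b ∧ T.Adj x y ∧ s(a, b) ≠ s(x, y) ∧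
      InQ P u v w a b ∧ InQ P u v w x y := by
  lift w to P using hwP
  lift u to P using huP
  lift v to P using hvP
  rw [Subtype.coe_ne_coe] at huw hvw huv
  have hP : InConvexPositionExcept P w :=
    { not_collinear p q r hpq hqr hpr := hgen p p.2 q q.2 r r.2 (Subtype.coe_ne_coe.2 hpq)
        (Subtype.coe_ne_coe.2 hqr) (Subtype.coe_ne_coe.2 hpr)
      notMem_interior p hp := hwUnique p p.2 (Subtype.coe_ne_coe.2 hp) }
  have hpre := hconn.preconnected
  by_cases! hchord : ∃ a b, T.Adj a b ∧ IsChord w a b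
  · obtain ⟨a, b, hab, hchord, hcap⟩ := exists_adj_isChord_cap_maximal hchord
    by_cases! hfar : ∃ x y, T.Adj x y ∧ IsChord w x y ∧ 0 < side w a b x
    · obtain ⟨x, y, hxy, hxychord, hx⟩ := hfar
      obtain ⟨c, d, e, f, hcd, hef, hne, hhull, hhull'⟩ :=
        hT.exists_two_isHullEdge hP hpre hab hchord hxy hxychord (hcap x y hxy hxychord) hx
      exact ⟨c, d, e, f, hcd, hef, hne, .inl hhull, .inl hhull'⟩
    · obtain ⟨c, d, hcd, hcdchord, hhull, -⟩ := hT.exists_isHullEdge hP hpre hab hchord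
      have hangle := hmax a a.2 b b.2 (Subtype.coe_ne_coe.2 hchord.left_ne)
        (Subtype.coe_ne_coe.2 hchord.right_ne)
      rcases hT.adj_center_of_angle_le hP hpre hab hchord hfar huw hvw hangle with h | h
      · exact ⟨c, d, u, w, hcd, h, hcdchord.mk_ne_mk_center, .inl hhull, .inr (.inl rfl)⟩
      · exact ⟨c, d, v, w, hcd, h, hcdchord.mk_ne_mk_center, .inl hhull, .inr (.inr rfl)⟩
  · exact ⟨u, w, v, w, adj_center_of_forall_not_isChord hpre huw (hchord u),
      adj_center_of_forall_not_isChord hpre hvw (hchord v), fun h => huv (Sym2.congr_left.1 h),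
      .inr (.inl rfl), .inr (.inr rfl)⟩

/-- if `P` is a set of points in general position with exactly one point `w`
interior to the convex hull, and `Q` consists of the hull boundary edges together with two
edges `uw`, `vw` maximizing the angle `∠ u w v`, then every plane spanning tree of the
complete geometric graph on `P` contains at least two edges of `Q`. -/
theorem plane_tree_two_edges_in_Q (P : Finset (EuclideanSpace ℝ (Fin 2)))
    (hgen : ∀ p ∈ P, ∀ q ∈ P, ∀ r ∈ P, p ≠ q → q ≠ r → p ≠ r →
      ¬ Collinear ℝ ({p, q, r} : Set (EuclideanSpace ℝ (Fin 2))))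
    (w : EuclideanSpace ℝ (Fin 2)) (hwP : w ∈ P)
    (hwInt : w ∈ interior (convexHull ℝ (↑P : Set (EuclideanSpace ℝ (Fin 2)))))
    (hwUnique : ∀ p ∈ P, p ≠ w →
      p ∉ interior (convexHull ℝ (↑P : Set (EuclideanSpace ℝ (Fin 2)))))
    (u v : EuclideanSpace ℝ (Fin 2)) (huP : u ∈ P) (hvP : v ∈ P)
    (huw : u ≠ w) (hvw : v ≠ w) (huv : u ≠ v)
    (hmax : ∀ u' ∈ P, ∀ v' ∈ P, u' ≠ w → v' ≠ w → ∠ u' w v' ≤ ∠ u w v)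
    (T : SimpleGraph ↥P) (hT : IsPlaneSpanningTree T) :
    ∃ a b x y : ↥P, T.Adj a b ∧ T.Adj x y ∧ s(a, b) ≠ s(x, y) ∧
      InQ P u v w a b ∧ InQ P u v w x y :=
  plane_tree_two_edges_in_Q_general P hgen w hwP hwUnique u v huP hvP huw hvw huv hmax T
    hT.1.connected hT.2
end

section
/- Let G be a complete geometric graph on n ≥ 3 points in general position with exactly one point interior to the convex hull. If c is a coloring of the edges of G using exactly C(n,2) - n + 1 colors, then G contains a plane spanning tree all of whose edges have pairwise distinct colors. -/
/-!
Choose one edge of each colour and let `R` consist of the other edges. Then `R` has fewer than `n`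
edges, and each edge of `R` can be exchanged for the chosen edge of its colour. Call `R` blocking if
its edges meet every plane spanning tree; the claim is that the exchanges lead to some `R` that does
not block. Suppose all of them block.

As stars are plane, no vertex is isolated in `R`. By induction on the number of points, `n - 2`
edges never block: they are too few to contain the whole hull boundary, so some hull vertex misses a
hull edge, and it can be deleted and attached again along that edge. Deleting such a vertex from a
blocking `R` must therefore cost only one edge, so the vertex is a leaf of `R`. Two such leaves are
never adjacent in `R`, since exchanging the edge between them would isolate one of them.

Hence, if `za` is a hull edge outside `R` and the next hull edge `at` belongs to `R`, then so does
the hull edge after `t`, and exchanging `at` moves the gap from `a` to `t`. The gap travels around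
the hull, while the edges at the interior point `w` stay, until it reaches a neighbour of `w`, which
should be a leaf but has two neighbours. If `R` has no such gap, then it contains all hull edges and
has no edge left for `w`, or it contains none of them and is the star centred at `w`, which one
exchange destroys.
-/

open Set

section EdgeCount

variable {V : Type*} [Finite V] {R : SimpleGraph V}

theorem ncard_edgeSet_deleteIncidenceSet_add_ncard_neighborSet (v : V) :
    (R.deleteIncidenceSet v).edgeSet.ncard + (R.neighborSet v).ncard = R.edgeSet.ncard := by
  classical
  have := Fintype.ofFinite V
  simp only [← SimpleGraph.coe_edgeFinset, ← SimpleGraph.coe_neighborFinset, ncard_coe_finset,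
    SimpleGraph.card_edgeFinset_deleteIncidenceSet, SimpleGraph.card_neighborFinset_eq_degree]
  exact Nat.sub_add_cancel (R.degree_le_card_edgeFinset v)

theorem card_le_ncard_edgeSet_of_nontrivial_neighborSet {S : Finset V}
    (hS : ∀ v ∈ S, (R.neighborSet v).Nontrivial) : S.card ≤ R.edgeSet.ncard := by
  classical
  have := Fintype.ofFinite V
  have two_le_degree : ∀ v ∈ S, 2 ≤ R.degree v := fun v hv => by
    rw [← SimpleGraph.card_neighborFinset_eq_degree, ← ncard_coe_finset,
      SimpleGraph.coe_neighborFinset]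
    exact one_lt_ncard_iff_nontrivial.2 (hS v hv)
  have : S.card * 2 ≤ 2 * R.edgeSet.ncard :=
    calc S.card * 2 ≤ ∑ v ∈ S, R.degree v := Finset.card_nsmul_le_sum _ _ _ two_le_degree
      _ ≤ ∑ v, R.degree v := Finset.sum_le_univ_sum_of_nonneg fun _ => Nat.zero_le _
      _ = 2 * R.edgeSet.ncard := by
        rw [R.sum_degrees_eq_twice_card_edges, ← ncard_coe_finset, SimpleGraph.coe_edgeFinset]
  omega

end EdgeCount

section EdgeReplacement

variable {V κ : Type*}

/-- The graph obtained from `R` by replacing the edge `ab` with `xy`. The definition does not ask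
for `ab` to be an edge, nor for `xy` to be a new one. -/
def replaceEdge (R : SimpleGraph V) (a b x y : V) : SimpleGraph V :=
  R.deleteEdges {s(a, b)} ⊔ SimpleGraph.edge x y

theorem replaceEdge_adj {R : SimpleGraph V} {a b x y p q : V} :
    (replaceEdge R a b x y).Adj p q ↔
      R.Adj p q ∧ s(p, q) ≠ s(a, b) ∨ s(p, q) = s(x, y) ∧ p ≠ q := by
  simp [replaceEdge, SimpleGraph.edge_adj]

theorem edgeSet_compl_replaceEdge {R : SimpleGraph V} {a b x y : V} (hab : R.Adj a b)
    (hxy : ¬R.Adj x y) :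
    (replaceEdge R a b x y)ᶜ.edgeSet = insert s(a, b) (Rᶜ.edgeSet \ {s(x, y)}) := by
  ext e
  induction e using Sym2.ind with
  | _ p q =>
    simp only [SimpleGraph.mem_edgeSet, SimpleGraph.compl_adj, replaceEdge_adj, mem_insert_iff,
      mem_sdiff, mem_singleton_iff]
    by_cases hpq : s(p, q) = s(a, b)
    · have adj_pq : R.Adj p q := by rwa [← SimpleGraph.mem_edgeSet, hpq]
      have ne_xy : s(p, q) ≠ s(x, y) := fun h => hxy <| by rwa [← SimpleGraph.mem_edgeSet, ← h]
      have := adj_pq.ne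
      tauto
    · tauto

/-- A family of edge sets with fewer than `|V|` edges that behaves like the complements of the
systems of representatives of an edge colouring: each of their edges can be traded for a new one
without leaving the family. -/
structure IsExchangeFamily (F : Set (SimpleGraph V)) : Prop where
  ncard_lt : ∀ R ∈ F, R.edgeSet.ncard < Nat.card V
  exists_replaceEdge_mem : ∀ R ∈ F, ∀ a b, R.Adj a b →
    ∃ x y, ¬R.Adj x y ∧ replaceEdge R a b x y ∈ F

theorem bijOn_insert_diff_singleton {α β : Type*} {f : α → β} {s : Set α} {t : Set β} {a b : α}
    (hf : BijOn f s t) (ha : a ∈ s) (hab : f b = f a) : BijOn f (insert b (s \ {a})) t := by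
  have h := (hf.sdiff_singleton ha).insert (a := b) (by simp [hab])
  rwa [hab, insert_sdiff_singleton, insert_eq_of_mem (hf.mapsTo ha)] at h

theorem isExchangeFamily_setOf_bijOn_compl [Finite V] {c : Sym2 V → κ}
    (hc : (Nat.card V).choose 2 <
      (c '' (⊤ : SimpleGraph V).edgeSet).ncard + Nat.card V) :
    IsExchangeFamily {R : SimpleGraph V |
      BijOn c Rᶜ.edgeSet (c '' (⊤ : SimpleGraph V).edgeSet)} where
  ncard_lt R hR := by
    classical
    have := Fintype.ofFinite V
    have card_compl : Rᶜ.edgeSet.ncard = (c '' (⊤ : SimpleGraph V).edgeSet).ncard := by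
      rw [← hR.image_eq, hR.injOn.ncard_image]
    have card_top : (⊤ : SimpleGraph V).edgeSet.ncard = (Nat.card V).choose 2 := by
      rw [← SimpleGraph.coe_edgeFinset, ncard_coe_finset,
        SimpleGraph.card_edgeFinset_top_eq_card_choose_two, Nat.card_eq_fintype_card]
    have card_add : Rᶜ.edgeSet.ncard + R.edgeSet.ncard = (⊤ : SimpleGraph V).edgeSet.ncard := by
      rw [← top_sdiff, SimpleGraph.edgeSet_sdiff]
      exact ncard_sdiff_add_ncard_of_subset (SimpleGraph.edgeSet_mono le_top)
    omega
  exists_replaceEdge_mem R hR a b hab := by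
    obtain ⟨f, hf, hfab⟩ := hR.surjOn (mem_image_of_mem c
      (show s(a, b) ∈ (⊤ : SimpleGraph V).edgeSet from hab.ne))
    induction f using Sym2.ind with
    | _ x y =>
      have hxy : ¬R.Adj x y := hf.2
      refine ⟨x, y, hxy, ?_⟩
      rw [mem_ofPred_eq, edgeSet_compl_replaceEdge hab hxy]
      exact bijOn_insert_diff_singleton hR hf hfab.symm

theorem nonempty_setOf_bijOn_compl (c : Sym2 V → κ) :
    {R : SimpleGraph V | BijOn c Rᶜ.edgeSet (c '' (⊤ : SimpleGraph V).edgeSet)}.Nonempty := by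
  obtain ⟨E, hE, hbij⟩ := exists_subset_bijOn (⊤ : SimpleGraph V).edgeSet c
  refine ⟨(SimpleGraph.fromEdgeSet E)ᶜ, ?_⟩
  rw [SimpleGraph.edgeSet_top, subset_compl_iff_disjoint_right] at hE
  rwa [mem_ofPred_eq, compl_compl, SimpleGraph.edgeSet_fromEdgeSet, hE.sdiff_eq_left]

end EdgeReplacement

/-- The orientation of the triples of a planar point set in general position, where `ccw a b c`
says that `abc` is a counterclockwise triangle. Only the axioms that hold for every such point set
and do not relate different triangles are built in. -/
structure TripleOrientation (V : Type*) where
  ccw : V → V → V → Prop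
  rotate : ∀ {a b c}, ccw a b c → ccw b c a
  asymm : ∀ {a b c}, ccw a b c → ¬ccw b a c
  total : ∀ {a b c}, a ≠ b → b ≠ c → a ≠ c → ccw a b c ∨ ccw b a c

namespace TripleOrientation

variable {V : Type*} (O : TripleOrientation V)

/-- Extreme points, encoded by the fact that the other points, as seen from an extreme point, are
linearly ordered by angle. -/
def IsExtreme (v : V) : Prop :=
  ∀ ⦃a b c⦄, O.ccw v a b → O.ccw v b c → O.ccw v a c

/-- Interior points, encoded by the fact that every line joining an interior point to another point
has points on both of its sides. -/
def IsInterior (w : V) : Prop :=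
  ∀ b, b ≠ w → (∃ p, O.ccw w b p) ∧ ∃ p, O.ccw w p b

/-- The directed edges of the convex hull of `Q`, traversed counterclockwise. -/
structure IsSide (Q : Finset V) (a b : V) : Prop where
  left_mem : a ∈ Q
  right_mem : b ∈ Q
  ne : a ≠ b
  ccw : ∀ p ∈ Q, p ≠ a → p ≠ b → O.ccw a b p

/-- The boundary of the convex hull of `Q`, as an undirected graph. -/
def hullGraph (Q : Finset V) : SimpleGraph V :=
  SimpleGraph.fromRel (O.IsSide Q)

/-- The line `ab` has the points `x` and `y` on the same side. -/
def SameSide (a b x y : V) : Prop :=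
  O.ccw a b x ∧ O.ccw a b y ∨ O.ccw b a x ∧ O.ccw b a y

/-- The segments `ab` and `xy` do not cross. The four points are assumed to be distinct, so that
one of the two lines spanned by the segments has the other segment on one side. -/
def Noncrossing (a b x y : V) : Prop :=
  O.SameSide a b x y ∨ O.SameSide x y a b

/-- Plane graphs: edges without a common endpoint do not cross. -/
def IsPlane (T : SimpleGraph V) : Prop :=
  ∀ ⦃a b x y⦄, T.Adj a b → T.Adj x y → a ≠ x → a ≠ y → b ≠ x → b ≠ y → O.Noncrossing a b x y

/-- The graph `G` contains a plane graph on the vertex set `Q` that connects all of `Q`. -/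
def PlaneConnectable (G : SimpleGraph V) (Q : Finset V) : Prop :=
  ∃ T ≤ G, O.IsPlane T ∧ (∀ a b, T.Adj a b → a ∈ Q) ∧ ∀ a ∈ Q, ∀ b ∈ Q, T.Reachable a b

variable {O}

section Orientation

variable {a b c v w : V}

theorem ne_of_ccw (h : O.ccw a b c) : a ≠ b := by
  rintro rfl
  exact O.asymm h h

theorem ne_of_ccw' (h : O.ccw a b c) : b ≠ c :=
  ne_of_ccw (O.rotate h)

theorem asymm_right (h : O.ccw v a b) : ¬O.ccw v b a := fun h' =>
  O.asymm h (O.rotate (O.rotate h'))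

theorem total_right (hva : v ≠ a) (hab : a ≠ b) (hvb : v ≠ b) : O.ccw v a b ∨ O.ccw v b a :=
  (O.total hva hab hvb).imp_right O.rotate

theorem IsExtreme.wellFounded [Finite V] (hv : O.IsExtreme v) : WellFounded (O.ccw v) :=
  have : IsTrans V (O.ccw v) := ⟨hv⟩
  have : Std.Irrefl (O.ccw v) := ⟨fun _ h => asymm_right h h⟩
  Finite.wellFounded_of_trans_of_irrefl _

theorem IsExtreme.wellFounded_swap [Finite V] (hv : O.IsExtreme v) :
    WellFounded (Function.swap (O.ccw v)) :=
  have : IsTrans V (Function.swap (O.ccw v)) := ⟨fun _ _ _ hab hbc => hv hbc hab⟩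
  have : Std.Irrefl (Function.swap (O.ccw v)) := ⟨fun _ h => asymm_right h h⟩
  Finite.wellFounded_of_trans_of_irrefl _

theorem SameSide.swap_left {x y : V} (h : O.SameSide a b x y) : O.SameSide b a x y :=
  h.symm

theorem SameSide.swap_right {x y : V} (h : O.SameSide a b x y) : O.SameSide a b y x :=
  h.imp And.symm And.symm

theorem Noncrossing.swap_left {x y : V} (h : O.Noncrossing a b x y) : O.Noncrossing b a x y :=
  h.imp SameSide.swap_left SameSide.swap_right

theorem Noncrossing.symm {x y : V} (h : O.Noncrossing a b x y) : O.Noncrossing x y a b :=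
  Or.symm h

end Orientation

section Hull

variable {Q : Finset V} {a b p v w : V}

theorem IsExtreme.exists_isSide_from [Finite V] (hv : O.IsExtreme v) (hvQ : v ∈ Q) (hpQ : p ∈ Q)
    (hpv : p ≠ v) : ∃ a, O.IsSide Q v a := by
  obtain ⟨a, ⟨haQ, hav⟩, hmin⟩ := hv.wellFounded.has_min {q | q ∈ Q ∧ q ≠ v} ⟨p, hpQ, hpv⟩
  exact ⟨a, hvQ, haQ, hav.symm, fun q hq hqv hqa =>
    (total_right hav.symm hqa.symm hqv.symm).resolve_right (hmin q ⟨hq, hqv⟩)⟩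

theorem IsExtreme.exists_isSide_to [Finite V] (hv : O.IsExtreme v) (hvQ : v ∈ Q) (hpQ : p ∈ Q)
    (hpv : p ≠ v) : ∃ a, O.IsSide Q a v := by
  obtain ⟨a, ⟨haQ, hav⟩, hmin⟩ := hv.wellFounded_swap.has_min {q | q ∈ Q ∧ q ≠ v} ⟨p, hpQ, hpv⟩
  exact ⟨a, haQ, hvQ, hav, fun q hq hqa hqv => O.rotate <| O.rotate <|
    (total_right hav.symm hqa.symm hqv.symm).resolve_left (hmin q ⟨hq, hqv⟩)⟩

theorem IsSide.not_isSide_swap (h : O.IsSide Q a b) (hp : p ∈ Q) (hpa : p ≠ a) (hpb : p ≠ b) :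
    ¬O.IsSide Q b a := fun h' =>
  O.asymm (h.ccw p hp hpa hpb) (h'.ccw p hp hpb hpa)

theorem IsSide.eq_of_left (ha : O.IsSide Q v a) (hb : O.IsSide Q v b) : a = b := by
  by_contra hab
  exact asymm_right (ha.ccw b hb.right_mem hb.ne.symm (Ne.symm hab))
    (hb.ccw a ha.right_mem ha.ne.symm hab)

theorem hullGraph_adj : (O.hullGraph Q).Adj a b ↔ O.IsSide Q a b ∨ O.IsSide Q b a := by
  rw [hullGraph, SimpleGraph.fromRel_adj, and_iff_right_iff_imp]
  rintro (h | h)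
  exacts [h.ne, h.ne.symm]

theorem IsSide.adj_hullGraph (h : O.IsSide Q a b) : (O.hullGraph Q).Adj a b :=
  hullGraph_adj.2 (.inl h)

theorem sameSide_of_hullGraph_adj {x y : V} (h : (O.hullGraph Q).Adj a b) (hx : x ∈ Q)
    (hy : y ∈ Q) (hxa : x ≠ a) (hxb : x ≠ b) (hya : y ≠ a) (hyb : y ≠ b) : O.SameSide a b x y := by
  rcases hullGraph_adj.1 h with h | h
  · exact .inl ⟨h.ccw x hx hxa hxb, h.ccw y hy hya hyb⟩
  · exact .inr ⟨h.ccw x hx hxb hxa, h.ccw y hy hyb hya⟩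

theorem IsExtreme.nontrivial_neighborSet_hullGraph [Finite V] (hv : O.IsExtreme v) (hvQ : v ∈ Q)
    (hQ : 2 < Q.card) : ((O.hullGraph Q).neighborSet v).Nontrivial := by
  classical
  obtain ⟨p, hpQ, hpv⟩ := Finset.exists_mem_ne (show 1 < Q.card by omega) v
  obtain ⟨a, ha⟩ := hv.exists_isSide_to hvQ hpQ hpv
  obtain ⟨b, hb⟩ := hv.exists_isSide_from hvQ hpQ hpv
  obtain ⟨q, hqQ, hq⟩ := Finset.exists_mem_notMem_of_card_lt_card
    ((Finset.card_le_two (a := a) (b := v)).trans_lt hQ)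
  simp only [Finset.mem_insert, Finset.mem_singleton, not_or] at hq
  refine ⟨a, ha.adj_hullGraph.symm, b, hb.adj_hullGraph, ?_⟩
  rintro rfl
  exact ha.not_isSide_swap hqQ hq.1 hq.2 hb

variable [Fintype V]

theorem IsSide.right_ne_of_isInterior (h : O.IsSide .univ a b) (hw : O.IsInterior w) : b ≠ w := by
  rintro rfl
  obtain ⟨⟨p, hp⟩, -⟩ := hw a h.ne
  exact O.asymm hp (h.ccw p (Finset.mem_univ p) (ne_of_ccw' hp).symm
    (ne_of_ccw' (O.rotate hp)))

theorem IsSide.left_ne_of_isInterior (h : O.IsSide .univ a b) (hw : O.IsInterior w) : a ≠ w := by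
  rintro rfl
  obtain ⟨-, p, hp⟩ := hw b h.ne.symm
  exact asymm_right hp (h.ccw p (Finset.mem_univ p) (ne_of_ccw hp).symm (ne_of_ccw' hp))

theorem ne_of_hullGraph_adj (h : (O.hullGraph .univ).Adj a b) (hw : O.IsInterior w) : b ≠ w :=
  (hullGraph_adj.1 h).elim (·.right_ne_of_isInterior hw) (·.left_ne_of_isInterior hw)

theorem IsInterior.two_lt_card (hw : O.IsInterior w) (hb : b ≠ w) : 2 < Fintype.card V := by
  obtain ⟨⟨p, hp⟩, -⟩ := hw b hb
  exact Fintype.two_lt_card_iff.2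
    ⟨w, b, p, ne_of_ccw hp, (ne_of_ccw' (O.rotate hp)).symm, ne_of_ccw' hp⟩

theorem reflTransGen_isSide (hext : ∀ v ≠ w, O.IsExtreme v) (hw : O.IsInterior w) (hv : v ≠ w)
    (hb : b ≠ w) : Relation.ReflTransGen (O.IsSide .univ) v b := by
  induction b using (hext v hv).wellFounded.induction with
  | _ b ih =>
    by_cases hbv : b = v
    · rw [hbv]
    obtain ⟨a, ha⟩ := (hext b hb).exists_isSide_to (Finset.mem_univ b) (Finset.mem_univ v)
      (Ne.symm hbv)
    by_cases hav : a = v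
    · exact .single (hav ▸ ha)
    · have : O.ccw v a b := O.rotate <| O.rotate <|
        ha.ccw v (Finset.mem_univ v) (Ne.symm hav) (Ne.symm hbv)
      exact .tail (ih a this (ha.left_ne_of_isInterior hw)) ha

end Hull

section Connectable

variable {G G' R T : SimpleGraph V} {Q : Finset V} {t v w : V}

theorem IsPlane.sup_edge (hT : O.IsPlane T)
    (h : ∀ x y, T.Adj x y → x ≠ v → x ≠ t → y ≠ v → y ≠ t → O.Noncrossing v t x y) :
    O.IsPlane (T ⊔ SimpleGraph.edge v t) := by
  intro a b x y hab hxy hax hay hbx hby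
  simp only [SimpleGraph.sup_adj, SimpleGraph.edge_adj] at hab hxy
  rcases hab with hab | ⟨⟨rfl, rfl⟩ | ⟨rfl, rfl⟩, -⟩ <;>
    rcases hxy with hxy | ⟨⟨rfl, rfl⟩ | ⟨rfl, rfl⟩, -⟩
  · exact hT hab hxy hax hay hbx hby
  · exact (h a b hab hax hay hbx hby).symm
  · exact (h a b hab hay hax hby hbx).swap_left.symm
  · exact h x y hxy hax.symm hbx.symm hay.symm hby.symm
  · exact absurd rfl hax
  · exact absurd rfl hay
  · exact (h x y hxy hbx.symm hax.symm hby.symm hay.symm).swap_left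
  · exact absurd rfl hay
  · exact absurd rfl hax

theorem PlaneConnectable.of_forall_adj (h : O.PlaneConnectable G Q)
    (hG : ∀ a ∈ Q, ∀ b ∈ Q, G.Adj a b → G'.Adj a b) : O.PlaneConnectable G' Q := by
  obtain ⟨T, hTG, hplane, hmem, hreach⟩ := h
  exact ⟨T, fun a b hab => hG a (hmem a b hab) b (hmem b a hab.symm) (hTG hab), hplane, hmem,
    hreach⟩

theorem planeConnectable_of_star (hv : v ∈ Q) (h : ∀ u ∈ Q, u ≠ v → G.Adj v u) :
    O.PlaneConnectable G Q := by
  let T : SimpleGraph V := SimpleGraph.fromRel fun a b => a = v ∧ b ∈ Q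
  have adj_iff : ∀ {a b}, T.Adj a b ↔ a ≠ b ∧ (a = v ∧ b ∈ Q ∨ b = v ∧ a ∈ Q) :=
    SimpleGraph.fromRel_adj _ _ _
  have reachable_center : ∀ a ∈ Q, T.Reachable a v := fun a ha => by
    by_cases hav : a = v
    · rw [hav]
    · exact (adj_iff.2 ⟨hav, .inr ⟨rfl, ha⟩⟩).reachable
  refine ⟨T, fun a b hab => ?_, fun a b x y hab hxy => ?_, fun a b hab => ?_,
    fun a ha b hb => (reachable_center a ha).trans (reachable_center b hb).symm⟩
  · obtain ⟨hne, ⟨rfl, hb⟩ | ⟨rfl, ha⟩⟩ := adj_iff.1 hab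
    exacts [h b hb hne.symm, (h a ha hne).symm]
  · grind
  · grind

theorem exists_mem_adj_of_not_planeConnectable (h : ¬O.PlaneConnectable Rᶜ Q) (hv : v ∈ Q) :
    ∃ u ∈ Q, R.Adj v u := by
  by_contra! hvR
  exact h (planeConnectable_of_star hv fun u hu huv => ⟨huv.symm, hvR u hu⟩)

theorem PlaneConnectable.of_erase [DecidableEq V] (h : O.PlaneConnectable G (Q.erase v))
    (hside : (O.hullGraph Q).Adj v t) (hvt : G.Adj v t) : O.PlaneConnectable G Q := by
  obtain ⟨T, hTG, hplane, hmem, hreach⟩ := h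
  obtain ⟨hvQ, htQ⟩ : v ∈ Q ∧ t ∈ Q :=
    (hullGraph_adj.1 hside).elim (fun h => ⟨h.left_mem, h.right_mem⟩)
      fun h => ⟨h.right_mem, h.left_mem⟩
  have mem_Q : ∀ a b, T.Adj a b → a ∈ Q := fun a b hab => Finset.mem_of_mem_erase (hmem a b hab)
  have adj_vt : (T ⊔ SimpleGraph.edge v t).Adj v t := by simp [SimpleGraph.edge_adj, hvt.ne]
  have reachable_t : ∀ a ∈ Q, (T ⊔ SimpleGraph.edge v t).Reachable a t := fun a ha => by
    by_cases hav : a = v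
    · exact hav ▸ adj_vt.reachable
    · exact (hreach a (Finset.mem_erase.2 ⟨hav, ha⟩) t
        (Finset.mem_erase.2 ⟨hvt.ne.symm, htQ⟩)).mono le_sup_left
  refine ⟨T ⊔ SimpleGraph.edge v t, sup_le hTG (G.edge_le_iff.2 (.inr hvt)),
    hplane.sup_edge fun x y hxy hxv hxt hyv hyt => .inl (sameSide_of_hullGraph_adj hside
      (mem_Q x y hxy) (mem_Q y x hxy.symm) hxv hxt hyv hyt), fun a b hab => ?_,
    fun a ha b hb => (reachable_t a ha).trans (reachable_t b hb).symm⟩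
  simp only [SimpleGraph.sup_adj, SimpleGraph.edge_adj] at hab
  rcases hab with hab | ⟨⟨rfl, -⟩ | ⟨rfl, -⟩, -⟩
  exacts [mem_Q a b hab, hvQ, htQ]

theorem PlaneConnectable.of_compl_deleteIncidenceSet [DecidableEq V]
    (h : O.PlaneConnectable (R.deleteIncidenceSet v)ᶜ (Q.erase v)) :
    O.PlaneConnectable Rᶜ (Q.erase v) :=
  h.of_forall_adj fun a ha b hb hab => by
    simp_all [SimpleGraph.deleteIncidenceSet_adj]

/-- Induction on `Q`: a point whose hull edge survives in `Rᶜ` can be attached as a leaf along that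
edge; if there is none, then `R` contains the whole hull boundary and has too many edges. -/
theorem planeConnectable_compl_of_ncard_add_two_le [Finite V]
    (hext : ∀ v ∈ Q, v ≠ w → O.IsExtreme v) (hQ : R.edgeSet.ncard + 2 ≤ Q.card) :
    O.PlaneConnectable Rᶜ Q := by
  classical
  induction hn : Q.card generalizing Q R with
  | zero => omega
  | succ n ih =>
    by_contra hblock
    have neighbor_nonempty : ∀ v ∈ Q, (R.neighborSet v).Nonempty := fun v hv =>
      (exists_mem_adj_of_not_planeConnectable hblock hv).imp fun _ => And.right
    have two_lt_card : 2 < Q.card := by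
      obtain ⟨v, hv⟩ : Q.Nonempty := Finset.card_pos.1 (by omega)
      obtain ⟨u, hu⟩ := neighbor_nonempty v hv
      have : 0 < R.edgeSet.ncard := (ncard_pos (toFinite _)).2 ⟨s(v, u), hu⟩
      omega
    have hull_le : ∀ v ∈ Q, ∀ t, (O.hullGraph Q).Adj v t → R.Adj v t := by
      intro v hv t hside
      by_contra hvt
      have delete_card := ncard_edgeSet_deleteIncidenceSet_add_ncard_neighborSet (R := R) v
      have neighbor_card := (ncard_pos (toFinite _)).2 (neighbor_nonempty v hv)
      have erase_card := Finset.card_erase_of_mem hv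
      exact hblock <| (PlaneConnectable.of_compl_deleteIncidenceSet <|
        ih (fun u hu => hext u (Finset.mem_of_mem_erase hu)) (by omega) (by omega)).of_erase
          hside ⟨hside.ne, hvt⟩
    have : (Q.erase w).card ≤ R.edgeSet.ncard :=
      card_le_ncard_edgeSet_of_nontrivial_neighborSet fun v hv => by
        obtain ⟨hvw, hvQ⟩ := Finset.mem_erase.1 hv
        exact ((hext v hvQ hvw).nontrivial_neighborSet_hullGraph hvQ two_lt_card).mono
          (hull_le v hvQ)
    have := Q.pred_card_le_card_erase (a := w)
    omega

end Connectable

section Exchange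

variable [Fintype V] {R : SimpleGraph V} {F : Set (SimpleGraph V)} {a b c d t u v w x y : V}

variable (O) in
/-- The edges of `R` meet every plane spanning tree. -/
def Blocks (R : SimpleGraph V) : Prop :=
  ¬O.PlaneConnectable Rᶜ .univ

variable (O) in
/-- Some edge of the convex hull at `v` does not belong to `R`. -/
def MissesSide (R : SimpleGraph V) (v : V) : Prop :=
  ∃ t, (O.hullGraph .univ).Adj v t ∧ ¬R.Adj v t

variable (O) in
/-- In counterclockwise order, the hull edge that ends at `u` does not belong to `R` and the one
that starts at `u` does. -/
def HasGapAt (R : SimpleGraph V) (u : V) : Prop :=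
  ∃ z t, O.IsSide .univ z u ∧ O.IsSide .univ u t ∧ ¬R.Adj z u ∧ R.Adj u t

theorem Blocks.exists_adj (h : O.Blocks R) (v : V) : ∃ u, R.Adj v u :=
  (exists_mem_adj_of_not_planeConnectable h (Finset.mem_univ v)).imp fun _ => And.right

theorem Blocks.subsingleton_neighborSet (h : O.Blocks R) (hext : ∀ v ≠ w, O.IsExtreme v)
    (hR : R.edgeSet.ncard < Nat.card V) (hv : O.MissesSide R v) :
    (R.neighborSet v).Subsingleton := by
  classical
  by_contra hnot
  obtain ⟨t, hside, hvt⟩ := hv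
  have delete_card := ncard_edgeSet_deleteIncidenceSet_add_ncard_neighborSet (R := R) v
  have neighbor_card := one_lt_ncard_iff_nontrivial.2 (not_subsingleton_iff.1 hnot)
  have erase_card := Finset.card_erase_of_mem (Finset.mem_univ v)
  rw [Finset.card_univ, ← Nat.card_eq_fintype_card] at erase_card
  exact h <| (PlaneConnectable.of_compl_deleteIncidenceSet <|
    planeConnectable_compl_of_ncard_add_two_le (fun u _ => hext u) (by omega)).of_erase
      hside ⟨hside.ne, hvt⟩

theorem Blocks.eq_or_eq_of_replaceEdge (h : O.Blocks (replaceEdge R v u x y))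
    (hv : (R.neighborSet v).Subsingleton) (hvu : R.Adj v u) : v = x ∨ v = y := by
  obtain ⟨t, ht⟩ := h.exists_adj v
  rcases replaceEdge_adj.1 ht with ⟨hvt, hne⟩ | ⟨heq, -⟩
  · exact absurd (by rw [hv hvt hvu]) hne
  · exact Sym2.mem_iff.1 (heq ▸ Sym2.mem_mk_left v t)

theorem Blocks.not_adj_of_replaceEdge (h : O.Blocks (replaceEdge R v u x y)) (hxy : ¬R.Adj x y)
    (hv : (R.neighborSet v).Subsingleton) (hu : (R.neighborSet u).Subsingleton) :
    ¬R.Adj v u := by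
  intro hvu
  have h' : O.Blocks (replaceEdge R u v x y) := by
    rwa [replaceEdge, Sym2.eq_swap]
  rcases h.eq_or_eq_of_replaceEdge hv hvu with rfl | rfl <;>
    rcases h'.eq_or_eq_of_replaceEdge hu hvu.symm with rfl | rfl
  exacts [hvu.ne rfl, hxy hvu, hxy hvu.symm, hvu.ne rfl]

theorem exists_hasGapAt (hext : ∀ v ≠ w, O.IsExtreme v) (hw : O.IsInterior w)
    (hab : O.IsSide .univ a b) (hR : R.Adj a b) (hcd : O.IsSide .univ c d) (hR' : ¬R.Adj c d) :
    ∃ u, O.HasGapAt R u := by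
  by_contra! hgap
  have exists_missing : ∀ u, Relation.ReflTransGen (O.IsSide .univ) d u →
      ∃ z, O.IsSide .univ z u ∧ ¬R.Adj z u := fun u hdu => by
    induction hdu with
    | refl => exact ⟨c, hcd, hR'⟩
    | tail _ huv ih =>
      obtain ⟨z, hzu, hz⟩ := ih
      exact ⟨_, huv, fun h => hgap _ ⟨z, _, hzu, huv, hz, h⟩⟩
  obtain ⟨z, hza, hz⟩ := exists_missing a <| reflTransGen_isSide hext hw
    (hcd.right_ne_of_isInterior hw) (hab.left_ne_of_isInterior hw)
  exact hgap a ⟨z, b, hza, hab, hz, hR⟩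

/-- If the hull edge after `t` were missing from `R`, then both `a` and `t` would be leaves of `R`,
and no single edge could make up for the removal of `at`. -/
theorem HasGapAt.replaceEdge (hgap : O.HasGapAt R a) (hext : ∀ v ≠ w, O.IsExtreme v)
    (hw : O.IsInterior w) (hR : R.edgeSet.ncard < Nat.card V) (hblocks : O.Blocks R)
    (hat : O.IsSide .univ a t) (hblocks' : O.Blocks (replaceEdge R a t x y)) (hxy : ¬R.Adj x y) :
    O.HasGapAt (replaceEdge R a t x y) t := by
  obtain ⟨z, t', hza, hat', hz, ht'⟩ := hgap
  obtain rfl := hat.eq_of_left hat'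
  obtain ⟨q, htq⟩ := (hext t (hat.right_ne_of_isInterior hw)).exists_isSide_from
    (Finset.mem_univ t) (Finset.mem_univ a) hat.ne
  have adj_tq : R.Adj t q := by
    by_contra hq
    exact hblocks'.not_adj_of_replaceEdge hxy
      (hblocks.subsingleton_neighborSet hext hR
        ⟨z, hza.adj_hullGraph.symm, fun h => hz h.symm⟩)
      (hblocks.subsingleton_neighborSet hext hR ⟨q, htq.adj_hullGraph, hq⟩) ht'
  have ne_qa : q ≠ a := by
    rintro rfl
    exact hat.not_isSide_swap (Finset.mem_univ w) (hat.left_ne_of_isInterior hw).symm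
      (hat.right_ne_of_isInterior hw).symm htq
  refine ⟨a, q, hat, htq, fun h => ?_, replaceEdge_adj.2 (.inl ⟨adj_tq, ?_⟩)⟩
  · rcases replaceEdge_adj.1 h with ⟨-, hne⟩ | ⟨heq, -⟩
    · exact hne rfl
    · exact hxy (by rwa [← SimpleGraph.mem_edgeSet, ← heq])
  · rw [Sym2.eq_swap]
    simpa using ⟨ne_qa, fun _ => hat.ne.symm⟩

/-- Trading the hull edge after the gap moves the gap to the next hull vertex and keeps the edges
at `w`. If the gap reaches a neighbour of `w`, that neighbour misses a hull edge without being a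
leaf. -/
theorem exists_not_blocks_of_hasGapAt (hext : ∀ v ≠ w, O.IsExtreme v)
    (hw : O.IsInterior w) (hF : IsExchangeFamily F) (hRF : R ∈ F) (hgap : O.HasGapAt R v) :
    ∃ R ∈ F, ¬O.Blocks R := by
  by_contra! hblocks
  obtain ⟨y, hwy⟩ := (hblocks R hRF).exists_adj w
  have hvw : v ≠ w := by
    obtain ⟨z, -, hzv, -⟩ := hgap
    exact hzv.right_ne_of_isInterior hw
  have exists_gap : ∀ u, Relation.ReflTransGen (O.IsSide .univ) v u →
      ∃ R ∈ F, R.Adj w y ∧ O.HasGapAt R u := fun u hvu => by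
    induction hvu with
    | refl => exact ⟨R, hRF, hwy, hgap⟩
    | @tail a t _ hat ih =>
      obtain ⟨R, hRF, hwy, hgap⟩ := ih
      have adj_at : R.Adj a t := by
        obtain ⟨_, _, -, hat', -, h⟩ := hgap
        rwa [hat.eq_of_left hat']
      obtain ⟨x', y', hxy', hF'⟩ := hF.exists_replaceEdge_mem R hRF a t adj_at
      refine ⟨_, hF', replaceEdge_adj.2 (.inl ⟨hwy, fun h => ?_⟩),
        hgap.replaceEdge hext hw (hF.ncard_lt R hRF) (hblocks R hRF) hat (hblocks _ hF') hxy'⟩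
      rcases Sym2.mem_iff.1 (h ▸ Sym2.mem_mk_left w _) with rfl | rfl
      exacts [hat.left_ne_of_isInterior hw rfl, hat.right_ne_of_isInterior hw rfl]
  obtain ⟨R, hRF, hwy, z, t, hzy, hyt, hz, ht⟩ :=
    exists_gap y (reflTransGen_isSide hext hw hvw hwy.ne.symm)
  exact hyt.right_ne_of_isInterior hw <|
    (hblocks R hRF).subsingleton_neighborSet hext (hF.ncard_lt R hRF)
      ⟨z, hzy.adj_hullGraph.symm, fun h => hz h.symm⟩ ht hwy.symm

/-- If `yx` replaces the edge `yw` of the star `R`, then `x` has the neighbours `y` and `w` although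
it still misses a hull edge. -/
theorem not_blocks_replaceEdge_of_star (hext : ∀ v ≠ w, O.IsExtreme v) (hw : O.IsInterior w)
    (hstar : ∀ u v, R.Adj u v ↔ u ≠ v ∧ (u = w ∨ v = w)) (hyw : y ≠ w) (hab : ¬R.Adj a b)
    (hR : (replaceEdge R y w a b).edgeSet.ncard < Nat.card V) :
    ¬O.Blocks (replaceEdge R y w a b) := by
  intro hblocks
  obtain ⟨x, hyx⟩ := hblocks.exists_adj y
  have new_edge : s(y, x) = s(a, b) := by
    rcases replaceEdge_adj.1 hyx with ⟨hyx, hne⟩ | ⟨heq, -⟩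
    · exact absurd (by rw [(((hstar y x).1 hyx).2.resolve_left hyw)]) hne
    · exact heq
  have hxw : x ≠ w := by
    rintro rfl
    refine hab ?_
    rw [← SimpleGraph.mem_edgeSet, ← new_edge]
    exact (hstar y x).2 ⟨hyw, .inr rfl⟩
  have adj_xw : (replaceEdge R y w a b).Adj x w :=
    replaceEdge_adj.2 (.inl ⟨(hstar x w).2 ⟨hxw, .inr rfl⟩,
      fun h => hyx.ne.symm (Sym2.congr_left.1 h)⟩)
  obtain ⟨t, hside, hty⟩ := ((hext x hxw).nontrivial_neighborSet_hullGraph (Finset.mem_univ x)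
    (hw.two_lt_card hyw)).exists_ne y
  have not_adj_xt : ¬(replaceEdge R y w a b).Adj x t := fun h => by
    rcases replaceEdge_adj.1 h with ⟨hxt, -⟩ | ⟨heq, -⟩
    · exact ((hstar x t).1 hxt).2.elim hxw (ne_of_hullGraph_adj hside hw)
    · rw [← new_edge, Sym2.eq_swap] at heq
      exact hty (Sym2.congr_left.1 heq)
  exact hyw (hblocks.subsingleton_neighborSet hext hR ⟨t, hside, not_adj_xt⟩ hyx.symm adj_xw)

theorem exists_not_blocks_of_forall_isSide_not_adj (hext : ∀ v ≠ w, O.IsExtreme v)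
    (hw : O.IsInterior w) (hF : IsExchangeFamily F) (hRF : R ∈ F)
    (hR : ∀ a b, O.IsSide .univ a b → ¬R.Adj a b) :
    ∃ R ∈ F, ¬O.Blocks R := by
  by_contra! hblocks
  have leaf : ∀ u ≠ w, (R.neighborSet u).Subsingleton := fun u hu => by
    obtain ⟨t, ht⟩ := (hext u hu).exists_isSide_from (Finset.mem_univ u) (Finset.mem_univ w)
      hu.symm
    exact (hblocks R hRF).subsingleton_neighborSet hext (hF.ncard_lt R hRF)
      ⟨t, ht.adj_hullGraph, hR u t ht⟩
  have eq_or_eq_of_adj : ∀ u v, R.Adj u v → u = w ∨ v = w := fun u v huv => by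
    by_contra! hne
    obtain ⟨x, y, hxy, hF'⟩ := hF.exists_replaceEdge_mem R hRF u v huv
    exact (hblocks _ hF').not_adj_of_replaceEdge hxy (leaf u hne.1) (leaf v hne.2) huv
  have adj_w : ∀ u ≠ w, R.Adj u w := fun u hu => by
    obtain ⟨t, hut⟩ := (hblocks R hRF).exists_adj u
    exact (eq_or_eq_of_adj u t hut).resolve_left hu ▸ hut
  have star : ∀ u v, R.Adj u v ↔ u ≠ v ∧ (u = w ∨ v = w) := fun u v => by
    refine ⟨fun huv => ⟨huv.ne, eq_or_eq_of_adj u v huv⟩, ?_⟩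
    rintro ⟨huv, rfl | rfl⟩
    exacts [(adj_w v huv.symm).symm, adj_w u huv]
  obtain ⟨y, hwy⟩ := (hblocks R hRF).exists_adj w
  obtain ⟨a, b, hab, hF'⟩ := hF.exists_replaceEdge_mem R hRF y w hwy.symm
  exact not_blocks_replaceEdge_of_star hext hw star hwy.ne.symm hab (hF.ncard_lt _ hF')
    (hblocks _ hF')

theorem exists_isSide_not_adj (hext : ∀ v ≠ w, O.IsExtreme v) (hw : O.IsInterior w)
    (hR : R.edgeSet.ncard < Nat.card V) (hwy : R.Adj w y) :
    ∃ a b, O.IsSide .univ a b ∧ ¬R.Adj a b := by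
  classical
  by_contra! hsides
  have hull_le : O.hullGraph .univ ≤ R.deleteIncidenceSet w := fun a b hab => by
    refine SimpleGraph.deleteIncidenceSet_adj.2
      ⟨?_, ne_of_hullGraph_adj hab.symm hw, ne_of_hullGraph_adj hab hw⟩
    exact (hullGraph_adj.1 hab).elim (hsides a b) fun h => (hsides b a h).symm
  have erase_le : (Finset.univ.erase w).card ≤ (R.deleteIncidenceSet w).edgeSet.ncard :=
    card_le_ncard_edgeSet_of_nontrivial_neighborSet fun v hv =>
      ((hext v (Finset.ne_of_mem_erase hv)).nontrivial_neighborSet_hullGraph (Finset.mem_univ v)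
        (hw.two_lt_card hwy.ne.symm)).mono fun _ h => hull_le h
  have erase_card := Finset.card_erase_of_mem (Finset.mem_univ w)
  rw [Finset.card_univ, ← Nat.card_eq_fintype_card] at erase_card
  have delete_card := ncard_edgeSet_deleteIncidenceSet_add_ncard_neighborSet (R := R) w
  have neighbor_card := (ncard_pos (toFinite (R.neighborSet w))).2 ⟨y, hwy⟩
  omega

theorem exists_planeConnectable_compl (hext : ∀ v ≠ w, O.IsExtreme v) (hw : O.IsInterior w)
    (hF : IsExchangeFamily F) (hne : F.Nonempty) : ∃ R ∈ F, O.PlaneConnectable Rᶜ .univ := by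
  suffices ∃ R ∈ F, ¬O.Blocks R from this.imp fun _ => And.imp_right not_not.1
  obtain ⟨R, hRF⟩ := hne
  by_cases hblocks : O.Blocks R
  · obtain ⟨y, hwy⟩ := hblocks.exists_adj w
    obtain ⟨c, d, hcd, hR'⟩ := exists_isSide_not_adj hext hw (hF.ncard_lt R hRF) hwy
    by_cases hsides : ∃ a b, O.IsSide .univ a b ∧ R.Adj a b
    · obtain ⟨a, b, hab, hR⟩ := hsides
      obtain ⟨u, hgap⟩ := exists_hasGapAt hext hw hab hR hcd hR'
      exact exists_not_blocks_of_hasGapAt hext hw hF hRF hgap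
    · push Not at hsides
      exact exists_not_blocks_of_forall_isSide_not_adj hext hw hF hRF hsides
  · exact ⟨R, hRF, hblocks⟩

end Exchange

end TripleOrientation

section PlaneGeometry

local notation "ℝ²" => EuclideanSpace ℝ (Fin 2)

/-- Twice the signed area of the triangle `abc`; it is positive when `abc` is counterclockwise. -/
def orientDet (a b c : ℝ²) : ℝ :=
  (b 0 - a 0) * (c 1 - a 1) - (b 1 - a 1) * (c 0 - a 0)

variable {a b c x y : ℝ²}

theorem orientDet_rotate (a b c : ℝ²) : orientDet b c a = orientDet a b c := by
  simp only [orientDet]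
  ring

theorem orientDet_swap (a b c : ℝ²) : orientDet b a c = -orientDet a b c := by
  simp only [orientDet]
  ring

theorem orientDet_swap_right (a b c : ℝ²) : orientDet a c b = -orientDet a b c := by
  simp only [orientDet]
  ring

theorem orientDet_left (a b : ℝ²) : orientDet a b a = 0 := by
  simp [orientDet]

theorem orientDet_right (a b : ℝ²) : orientDet a b b = 0 := by
  simp only [orientDet]
  ring

theorem orientDet_smul_add_smul (a b x y : ℝ²) {s t : ℝ} (hst : s + t = 1) :
    orientDet a b (s • x + t • y) = s * orientDet a b x + t * orientDet a b y := by
  obtain rfl : t = 1 - s := by linarith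
  simp only [orientDet, PiLp.add_apply, PiLp.smul_apply, smul_eq_mul]
  ring

/-- Cramer's rule for the coordinates of `x - v` in the basis `a - v`, `b - v`. -/
theorem orientDet_smul_sub (v a b x : ℝ²) :
    orientDet v a b • (x - v) = orientDet v a x • (b - v) - orientDet v b x • (a - v) := by
  ext i
  fin_cases i <;> simp [orientDet] <;> ring

theorem openSegment_inter_openSegment_eq_empty (hx : 0 < orientDet a b x)
    (hy : 0 < orientDet a b y) : openSegment ℝ a b ∩ openSegment ℝ x y = ∅ := by
  refine eq_empty_of_forall_notMem ?_
  rintro z ⟨⟨s, t, -, -, hst, rfl⟩, s', t', hs', ht', hst', hz⟩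
  have on_line : orientDet a b (s • a + t • b) = 0 := by
    simp [orientDet_smul_add_smul a b a b hst, orientDet_left, orientDet_right]
  rw [← hz, orientDet_smul_add_smul a b x y hst'] at on_line
  have := mul_pos hs' hx
  have := mul_pos ht' hy
  linarith

theorem exists_strongDual_sub_eq_orientDet (hab : a ≠ b) :
    ∃ g : StrongDual ℝ ℝ², g ≠ 0 ∧ ∀ x, g x - g a = orientDet a b x := by
  refine ⟨(b 0 - a 0) • EuclideanSpace.proj 1 - (b 1 - a 1) • EuclideanSpace.proj 0,
    fun hg => hab ?_, fun x => ?_⟩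
  · have h0 := DFunLike.congr_fun hg (EuclideanSpace.single 0 1)
    have h1 := DFunLike.congr_fun hg (EuclideanSpace.single 1 1)
    simp only [sub_apply, smul_apply, PiLp.proj_apply, ne_eq, one_ne_zero, zero_ne_one,
      not_false_eq_true, PiLp.single_eq_of_ne, smul_eq_mul, mul_zero, PiLp.single_eq_same, mul_one,
      zero_sub, neg_sub, zero_apply, sub_eq_zero, sub_zero] at h0 h1
    ext i
    fin_cases i
    exacts [h1.symm, h0]
  · simp [orientDet]
    ring

theorem collinear_of_orientDet_eq_zero (h : orientDet a b c = 0) :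
    Collinear ℝ {a, b, c} := by
  rcases eq_or_ne a b with rfl | hab
  · simpa using collinear_pair ℝ a c
  obtain ⟨y, hy⟩ : ∃ y, orientDet a b y ≠ 0 := by
    obtain ⟨g, hg, g_sub⟩ := exists_strongDual_sub_eq_orientDet hab
    obtain ⟨z, hz⟩ := DFunLike.ne_iff.1 hg
    exact ⟨a + z, by rwa [← g_sub, map_add, add_sub_cancel_left]⟩
  have sub_eq : c - a = (-(orientDet a b y)⁻¹ * orientDet a y c) • (b - a) := by
    have cramer := orientDet_smul_sub a b y c
    rw [h, zero_smul, zero_sub, ← neg_smul] at cramer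
    rw [neg_mul_comm, mul_smul, ← cramer, inv_smul_smul₀ hy]
  refine (collinear_iff_of_mem (mem_insert a _)).2 ⟨b - a, ?_⟩
  rintro _ (rfl | rfl | rfl)
  exacts [⟨0, by simp⟩, ⟨1, by simp⟩, ⟨_, eq_add_of_sub_eq sub_eq⟩]

theorem exists_mem_lt_of_mem_interior_convexHull {E : Type*} [AddCommGroup E] [Module ℝ E]
    [TopologicalSpace E] [ContinuousAdd E] [ContinuousSMul ℝ E] {f : StrongDual ℝ E} (hf : f ≠ 0)
    {s : Set E} {x : E} (hx : x ∈ interior (convexHull ℝ s)) : ∃ y ∈ s, f x < f y := by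
  by_contra! hle
  have hull_le : convexHull ℝ s ⊆ f ⁻¹' Iic (f x) :=
    convexHull_min hle ((convex_Iic (f x)).is_linear_preimage f.isLinear)
  have mem_interior : f x ∈ interior (f '' convexHull ℝ s) :=
    (f.isOpenMap_of_ne_zero hf).image_interior_subset _ (mem_image_of_mem f hx)
  have := interior_mono (image_subset_iff.2 hull_le) mem_interior
  rw [interior_Iic] at this
  exact self_notMem_Iio this

namespace TripleOrientation

variable {ι : Type*} {p : ι → ℝ²}

/-- The orientation of the triples of a family of points in general position. -/
def ofPoints (p : ι → ℝ²)
    (hp : ∀ i j k, i ≠ j → j ≠ k → i ≠ k → ¬Collinear ℝ {p i, p j, p k}) :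
    TripleOrientation ι where
  ccw i j k := 0 < orientDet (p i) (p j) (p k)
  rotate h := by rwa [orientDet_rotate]
  asymm h := by
    rw [orientDet_swap]
    linarith
  total {i j k} hij hjk hik := by
    rw [orientDet_swap (p i), neg_pos, or_comm]
    exact lt_or_gt_of_ne fun h => hp i j k hij hjk hik (collinear_of_orientDet_eq_zero h)

variable {hp : ∀ i j k, i ≠ j → j ≠ k → i ≠ k → ¬Collinear ℝ {p i, p j, p k}} {i j k l v w : ι}

theorem ofPoints_ccw : (ofPoints p hp).ccw i j k ↔ 0 < orientDet (p i) (p j) (p k) :=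
  Iff.rfl

theorem openSegment_inter_eq_empty_of_sameSide (h : (ofPoints p hp).SameSide i j k l) :
    openSegment ℝ (p i) (p j) ∩ openSegment ℝ (p k) (p l) = ∅ := by
  rcases h with ⟨hk, hl⟩ | ⟨hk, hl⟩
  · exact openSegment_inter_openSegment_eq_empty hk hl
  · rw [openSegment_symm]
    exact openSegment_inter_openSegment_eq_empty hk hl

theorem openSegment_inter_eq_empty_of_noncrossing (h : (ofPoints p hp).Noncrossing i j k l) :
    openSegment ℝ (p i) (p j) ∩ openSegment ℝ (p k) (p l) = ∅ := by
  rcases h with h | h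
  · exact openSegment_inter_eq_empty_of_sameSide h
  · rw [inter_comm]
    exact openSegment_inter_eq_empty_of_sameSide h

theorem isInterior_ofPoints (hinj : Function.Injective p)
    (hw : p w ∈ interior (convexHull ℝ (range p))) : (ofPoints p hp).IsInterior w := by
  intro b hb
  obtain ⟨g, hg, g_sub⟩ := exists_strongDual_sub_eq_orientDet (hinj.ne hb.symm)
  obtain ⟨_, ⟨i, rfl⟩, hi⟩ := exists_mem_lt_of_mem_interior_convexHull hg hw
  obtain ⟨_, ⟨j, rfl⟩, hj⟩ := exists_mem_lt_of_mem_interior_convexHull (neg_ne_zero.2 hg) hw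
  refine ⟨⟨i, ?_⟩, j, ?_⟩
  · rw [ofPoints_ccw, ← g_sub]
    exact sub_pos.2 hi
  · rw [ofPoints_ccw, orientDet_swap_right, ← g_sub, neg_sub]
    simpa using hj

/-- If the rotation `va`, `vb`, `vc` is counterclockwise at each step but `vc` is not reached from
`va` counterclockwise, then `v` lies in the interior of the triangle `abc`, and no nonzero
functional attains its maximum over the triangle there. -/
theorem isExtreme_ofPoints (hv : p v ∉ interior (convexHull ℝ (range p)))
    (hne : (interior (convexHull ℝ (range p))).Nonempty) : (ofPoints p hp).IsExtreme v := by
  intro a b c hab hbc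
  obtain ⟨f, hf, hmax⟩ := geometric_hahn_banach_of_nonempty_interior_point
    (convex_convexHull ℝ (range p)) hv hne
  have f_sub_le : ∀ i, f (p i - p v) ≤ 0 := fun i => by
    rw [map_sub, sub_nonpos]
    exact hmax _ (subset_convexHull ℝ _ (mem_range_self i))
  by_contra hac
  have hca : (ofPoints p hp).ccw v c a := by
    refine (total_right (ne_of_ccw hab) ?_ (ne_of_ccw' (rotate _ hbc)).symm).resolve_left hac
    rintro rfl
    exact asymm_right hab hbc
  have cramer : ∀ x, orientDet (p v) (p a) (p b) * f (x - p v) =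
      orientDet (p v) (p a) x * f (p b - p v) - orientDet (p v) (p b) x * f (p a - p v) := by
    intro x
    simpa using congrArg f (orientDet_smul_sub (p v) (p a) (p b) x)
  have f_a_b : f (p a - p v) = 0 ∧ f (p b - p v) = 0 := by
    have hab : 0 < orientDet (p v) (p a) (p b) := hab
    have hbc : 0 < orientDet (p v) (p b) (p c) := hbc
    have hac : orientDet (p v) (p a) (p c) < 0 := by
      rwa [orientDet_swap_right, neg_lt_zero]
    have := cramer (p c)
    have := f_sub_le a
    have := f_sub_le b
    have := mul_nonpos_of_nonneg_of_nonpos hab.le (f_sub_le c)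
    constructor <;> nlinarith
  refine hf (ContinuousLinearMap.ext fun z => ?_)
  have := cramer (p v + z)
  rw [f_a_b.1, f_a_b.2, mul_zero, mul_zero, sub_zero, add_sub_cancel_left] at this
  exact (mul_eq_zero.1 this).resolve_left (ne_of_gt hab)

end TripleOrientation

end PlaneGeometry

open TripleOrientation

theorem heterochromatic_plane_tree_one_interior_general {κ : Type*}
    (P : Finset (EuclideanSpace ℝ (Fin 2)))
    (hgen : ∀ p ∈ P, ∀ q ∈ P, ∀ r ∈ P, p ≠ q → q ≠ r → p ≠ r →
      ¬ Collinear ℝ ({p, q, r} : Set (EuclideanSpace ℝ (Fin 2))))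
    (w : EuclideanSpace ℝ (Fin 2)) (hwP : w ∈ P)
    (hwInt : w ∈ interior (convexHull ℝ (↑P : Set (EuclideanSpace ℝ (Fin 2)))))
    (hwUnique : ∀ p ∈ P, p ≠ w →
      p ∉ interior (convexHull ℝ (↑P : Set (EuclideanSpace ℝ (Fin 2)))))
    (c : Sym2 ↥P → κ)
    (hc : P.card.choose 2 < (c '' (⊤ : SimpleGraph ↥P).edgeSet).ncard + P.card) :
    ∃ T : SimpleGraph ↥P, IsPlaneSpanningTree T ∧ Set.InjOn c T.edgeSet := by
  have range_val : range (Subtype.val : ↥P → EuclideanSpace ℝ (Fin 2)) = ↑P :=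
    Subtype.range_coe
  let O : TripleOrientation ↥P := ofPoints Subtype.val fun i j k hij hjk hik =>
    hgen i i.2 j j.2 k k.2 (Subtype.coe_ne_coe.2 hij) (Subtype.coe_ne_coe.2 hjk)
      (Subtype.coe_ne_coe.2 hik)
  have hw : O.IsInterior ⟨w, hwP⟩ :=
    isInterior_ofPoints Subtype.val_injective (by rwa [range_val])
  have hext : ∀ v ≠ ⟨w, hwP⟩, O.IsExtreme v := fun v hv => isExtreme_ofPoints
    (by rw [range_val]; exact hwUnique v v.2 fun h => hv (Subtype.ext h))
    (by rw [range_val]; exact ⟨w, hwInt⟩)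
  obtain ⟨R, hR, G, hGR, hplane, -, hreach⟩ := exists_planeConnectable_compl hext hw
    (isExchangeFamily_setOf_bijOn_compl (by simpa using hc)) (nonempty_setOf_bijOn_compl c)
  have connected : G.Connected :=
    (SimpleGraph.connected_iff _).2 ⟨fun a b => hreach a (Finset.mem_univ a) b (Finset.mem_univ b),
      ⟨⟨w, hwP⟩⟩⟩
  obtain ⟨T, hTG, hT⟩ := connected.exists_isTree_le
  exact ⟨T, ⟨hT, fun a b x y hab hxy hax hay hbx hby => openSegment_inter_eq_empty_of_noncrossing
    (hplane (hTG hab) (hTG hxy) hax hay hbx hby)⟩,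
    hR.injOn.mono (SimpleGraph.edgeSet_mono (hTG.trans hGR))⟩

/-- if `G` is the complete geometric graph on `n ≥ 3` points in general position
with exactly one point interior to the convex hull and `c` is a colouring of the edges of `G`
with exactly `C(n,2) - n + 1` colours, then `G` contains a heterochromatic plane spanning
tree. -/
theorem heterochromatic_plane_tree_one_interior (P : Finset (EuclideanSpace ℝ (Fin 2)))
    (hcard : 3 ≤ P.card)
    (hgen : ∀ p ∈ P, ∀ q ∈ P, ∀ r ∈ P, p ≠ q → q ≠ r → p ≠ r →
      ¬ Collinear ℝ ({p, q, r} : Set (EuclideanSpace ℝ (Fin 2))))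
    (w : EuclideanSpace ℝ (Fin 2)) (hwP : w ∈ P)
    (hwInt : w ∈ interior (convexHull ℝ (↑P : Set (EuclideanSpace ℝ (Fin 2)))))
    (hwUnique : ∀ p ∈ P, p ≠ w →
      p ∉ interior (convexHull ℝ (↑P : Set (EuclideanSpace ℝ (Fin 2)))))
    (c : Sym2 ↥P → Fin (P.card.choose 2 - P.card + 1))
    (hc : Set.SurjOn c (⊤ : SimpleGraph ↥P).edgeSet Set.univ) :
    ∃ T : SimpleGraph ↥P, IsPlaneSpanningTree T ∧ Set.InjOn c T.edgeSet := by
  refine heterochromatic_plane_tree_one_interior_general P hgen w hwP hwInt hwUnique c ?_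
  rw [univ_subset_iff.1 hc, ncard_univ, Nat.card_eq_fintype_card, Fintype.card_fin]
  omega
end
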